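/- Let K ⊆ ℝ^d be a d-dimensional maximal lattice-free set. Then the recession cone rec(K) is a linear subspace of ℝ^d. -/

import Mathlib

open Pointwise

/-- The standard integer lattice `ℤ^d` viewed as a subset of `ℝ^d`. -/
def intLattice (d : ℕ) : Set (Fin d → ℝ) :=
  Set.range (fun z : Fin d → ℤ => fun i => (z i : ℝ))

/-- A set `K ⊆ ℝ^d` is lattice-free if it is closed, convex, and its interior
contains no point of `ℤ^d`. -/
def IsLatticeFree (d : ℕ) (K : Set (Fin d → ℝ)) : Prop :=
  IsClosed K ∧ Convex ℝ K ∧ interior K ∩ intLattice d = ∅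

/-- A lattice-free set is maximal if it is not properly contained in another
lattice-free set. -/
def IsMaxLatticeFree (d : ℕ) (K : Set (Fin d → ℝ)) : Prop :=
  IsLatticeFree d K ∧ ∀ K' : Set (Fin d → ℝ), IsLatticeFree d K' → K ⊆ K' → K' = K

/-- The recession cone of `K`: all vectors `u` with `K + u ⊆ K`. -/
def recCone (d : ℕ) (K : Set (Fin d → ℝ)) : Set (Fin d → ℝ) :=
  {u | ∀ x ∈ K, x + u ∈ K}

/-- A polyhedron: an intersection of finitely many closed halfspaces. -/
def IsPolyhedron (d : ℕ) (K : Set (Fin d → ℝ)) : Prop :=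
  ∃ (n : ℕ) (a : Fin n → (Fin d → ℝ)) (b : Fin n → ℝ),
    K = {x | ∀ i, ∑ j, a i j * x j ≤ b i}

/-- A polytope: the convex hull of finitely many points. -/
def IsPolytope (d : ℕ) (K : Set (Fin d → ℝ)) : Prop :=
  ∃ s : Finset (Fin d → ℝ), K = convexHull ℝ (s : Set (Fin d → ℝ))

/-- A facet of a `d`-dimensional convex set `K ⊆ ℝ^d`: a nonempty convex
(extreme) face of dimension `d - 1`. -/
def IsFacet (d : ℕ) (K F : Set (Fin d → ℝ)) : Prop :=
  F.Nonempty ∧ IsExtreme ℝ K F ∧ Convex ℝ F ∧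
    Module.finrank ℝ (affineSpan ℝ F).direction + 1 = d

/-!
Let `u` be a recession direction of `K` and `L` a subgroup of `E` with compact quotient. Multiples
of `u` return arbitrarily close to `0` in `E ⧸ L`. Hence if the line through `w ∈ interior K` in
direction `u` met `L`, then, after moving `w` slightly, the ray from `w` in direction `u` would meet
`L` as well, although that ray stays inside `interior K`. So the closure of `interior K + ℝ u` is
again `L`-free; if `interior K` is nonempty it contains `K`, so by maximality it equals `K`, and
`-u` is a recession direction too. If `interior K` is empty, then `affineSpan ℝ K` is itself closed,
convex and `L`-free, so by maximality `K` is an affine subspace.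
-/

open Filter Topology

section AddMonoid

variable {E : Type*} [AddMonoid E]

/-- The recession cone of a subset of an additive monoid, bundled as an additive submonoid; for
`E = Fin d → ℝ` its carrier is `recCone d K`. -/
def recessionCone (K : Set E) : AddSubmonoid E where
  carrier := {u | ∀ x ∈ K, x + u ∈ K}
  add_mem' := fun hu hv x hx => add_assoc x _ _ ▸ hv _ (hu x hx)
  zero_mem' := fun x hx => (add_zero x).symm ▸ hx

theorem le_recessionCone_add (K : Set E) (S : AddSubmonoid E) :
    S ≤ recessionCone (K + (S : Set E)) := by
  rintro u hu _ ⟨x, hx, v, hv, rfl⟩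
  exact ⟨x, hx, v + u, S.add_mem hv hu, (add_assoc x v u).symm⟩

end AddMonoid

section Module

variable {𝕜 E : Type*} [AddCommGroup E]

theorem neg_mem_recessionCone_affineSubspace [Ring 𝕜] [Module 𝕜 E] {A : AffineSubspace 𝕜 E}
    {u : E} (hu : u ∈ recessionCone (A : Set E)) : -u ∈ recessionCone (A : Set E) := by
  intro x hx
  have hdir : u ∈ A.direction := by
    simpa only [vsub_eq_sub, add_sub_cancel_left] using A.vsub_mem_direction (hu x hx) hx
  rw [add_comm]
  exact A.vadd_mem_of_mem_direction (neg_mem hdir) hx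

variable [Field 𝕜] [LinearOrder 𝕜] [IsStrictOrderedRing 𝕜] [Archimedean 𝕜] [Module 𝕜 E]
  {K : Set E}

theorem smul_mem_recessionCone (hK : Convex 𝕜 K) {u : E} (hu : u ∈ recessionCone K)
    {t : 𝕜} (ht : 0 ≤ t) : t • u ∈ recessionCone K := by
  intro x hx
  obtain ⟨n, hn⟩ := exists_nat_gt t
  have hn0 : (0 : 𝕜) < n := ht.trans_lt hn
  have hnu : x + (n : 𝕜) • u ∈ K := Nat.cast_smul_eq_nsmul 𝕜 n u ▸ nsmul_mem hu n x hx
  simpa only [smul_smul, div_mul_cancel₀ t hn0.ne'] using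
    hK.add_smul_mem hx hnu ⟨div_nonneg ht hn0.le, (div_le_one hn0).2 hn.le⟩

theorem exists_submodule_coe_eq_recessionCone (hK : Convex 𝕜 K)
    (hneg : ∀ u ∈ recessionCone K, -u ∈ recessionCone K) :
    ∃ S : Submodule 𝕜 E, (recessionCone K : Set E) = S := by
  refine ⟨{ recessionCone K with smul_mem' := fun t u hu => ?_ }, rfl⟩
  rcases le_total 0 t with ht | ht
  · exact smul_mem_recessionCone hK hu ht
  · rw [← neg_smul_neg]
    exact smul_mem_recessionCone hK (hneg u hu) (neg_nonneg.2 ht)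

end Module

section Topology

variable {E : Type*} [AddCommGroup E] [TopologicalSpace E] [IsTopologicalAddGroup E]

theorem recessionCone_le_recessionCone_interior (K : Set E) :
    recessionCone K ≤ recessionCone (interior K) := by
  intro u hu x hx
  have hsub : (· + u) '' interior K ⊆ K := Set.image_subset_iff.2 fun y hy =>
    hu y (interior_subset hy)
  exact interior_maximal hsub (isOpenMap_add_right u _ isOpen_interior)
    (Set.mem_image_of_mem _ hx)

theorem recessionCone_le_recessionCone_closure (K : Set E) :
    recessionCone K ≤ recessionCone (closure K) :=
  fun u hu _ hx => map_mem_closure (f := (· + u)) (by fun_prop) hx hu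

theorem frequently_exists_add_nsmul_mem (L : AddSubgroup E) [CompactSpace (E ⧸ L)] (u : E)
    {V : Set E} (hV : V ∈ 𝓝 0) : ∃ᶠ n : ℕ in atTop, ∃ v ∈ V, v + n • u ∈ L := by
  have hVmk : ((↑) '' V : Set (E ⧸ L)) ∈ 𝓝 0 :=
    QuotientAddGroup.isOpenMap_coe.image_mem_nhds hV
  refine ((mapClusterPt_zero_atTop_nsmul (-u : E ⧸ L)).frequently hVmk).mono ?_
  rintro n ⟨v, hv, hvn⟩
  refine ⟨v, hv, (QuotientAddGroup.eq_zero_iff _).1 ?_⟩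
  rw [QuotientAddGroup.mk_add, QuotientAddGroup.mk_nsmul, hvn, smul_neg, neg_add_cancel]

variable [Module ℝ E]

theorem disjoint_add_span_singleton {L : AddSubgroup E} [CompactSpace (E ⧸ L)] {C : Set E}
    (hconv : Convex ℝ C) (hopen : IsOpen C) (hdisj : Disjoint C (L : Set E)) {u : E}
    (hu : u ∈ recessionCone C) :
    Disjoint (C + (Submodule.span ℝ {u} : Set E)) (L : Set E) := by
  rw [Set.disjoint_left]
  rintro _ ⟨w, hw, _, htu, rfl⟩ hz
  obtain ⟨t, rfl⟩ := Submodule.mem_span_singleton.1 htu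
  have hV : (w + ·) ⁻¹' C ∈ 𝓝 0 :=
    (continuous_const_add w).continuousAt.preimage_mem_nhds (by simpa using hopen.mem_nhds hw)
  obtain ⟨N, hN⟩ := exists_nat_ge (-t)
  obtain ⟨n, ⟨v, hv, hvn⟩, hNn⟩ :=
    ((frequently_exists_add_nsmul_mem L u hV).and_eventually (eventually_ge_atTop N)).exists
  have htn : 0 ≤ t + n := by
    have : (N : ℝ) ≤ n := mod_cast hNn
    linarith
  have hmem : w + v + (t + n) • u ∈ C := smul_mem_recessionCone hconv hu htn _ hv
  refine Set.disjoint_left.1 hdisj hmem ?_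
  have hsplit : w + v + (t + n) • u = w + t • u + (v + n • u) := by
    rw [add_smul, Nat.cast_smul_eq_nsmul]
    abel
  exact hsplit ▸ add_mem hz hvn

/-- `K` is a closed convex `S`-free set. For `S = ℤ^d` this is `IsLatticeFree d K`. -/
structure IsConvexFree (S K : Set E) : Prop where
  isClosed : IsClosed K
  convex : Convex ℝ K
  disjoint : Disjoint (interior K) S

variable [ContinuousSMul ℝ E]

theorem isConvexFree_closure {S U : Set E} (hopen : IsOpen U) (hconv : Convex ℝ U)
    (hdisj : Disjoint U S) : IsConvexFree S (closure U) := by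
  refine ⟨isClosed_closure, hconv.closure, ?_⟩
  rcases U.eq_empty_or_nonempty with rfl | hne
  · simp
  · rwa [hconv.interior_closure_eq_interior_of_nonempty_interior (by rwa [hopen.interior_eq]),
      hopen.interior_eq]

theorem neg_mem_recessionCone_of_nonempty_interior {L : AddSubgroup E} [CompactSpace (E ⧸ L)]
    {K : Set E} (hK : Maximal (IsConvexFree (L : Set E)) K) (hne : (interior K).Nonempty) {u : E}
    (hu : u ∈ recessionCone K) : -u ∈ recessionCone K := by
  obtain ⟨hclosed, hconv, hdisj⟩ := hK.prop
  let U : Set E := interior K + (Submodule.span ℝ {u} : Set E)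
  have hUfree : IsConvexFree (L : Set E) (closure U) :=
    isConvexFree_closure isOpen_interior.add_right
      (hconv.interior.add (Submodule.convex _))
      (disjoint_add_span_singleton hconv.interior isOpen_interior hdisj
        (recessionCone_le_recessionCone_interior K hu))
  have hKU : K ⊆ closure U := calc
    K = closure (interior K) := by
      rw [hconv.closure_interior_eq_closure_of_nonempty_interior hne, hclosed.closure_eq]
    _ ⊆ closure U := closure_mono (Set.subset_add_left _ (Submodule.zero_mem _))
  rw [hK.eq_of_subset hUfree hKU]
  exact recessionCone_le_recessionCone_closure U <|
    le_recessionCone_add _ (Submodule.span ℝ {u}).toAddSubmonoid <|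
      Submodule.neg_mem _ (Submodule.mem_span_singleton_self u)

end Topology

section FiniteDimensional

variable {E : Type*} [NormedAddCommGroup E] [NormedSpace ℝ E] [FiniteDimensional ℝ E]

theorem coe_affineSpan_eq_of_interior_eq_empty {S K : Set E} (hK : Maximal (IsConvexFree S) K)
    (hempty : interior K = ∅) : (affineSpan ℝ K : Set E) = K := by
  have hconv : Convex ℝ (affineSpan ℝ K : Set E) := (affineSpan ℝ K).convex
  have hint : interior (affineSpan ℝ K : Set E) = ∅ := by
    rw [← Set.not_nonempty_iff_eq_empty] at hempty ⊢
    rwa [hconv.interior_nonempty_iff_affineSpan_eq_top, AffineSubspace.affineSpan_coe,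
      ← hK.prop.convex.interior_nonempty_iff_affineSpan_eq_top]
  refine (hK.eq_of_subset ⟨AffineSubspace.closed_of_finiteDimensional _, hconv, ?_⟩
    (subset_affineSpan ℝ K)).symm
  simp only [hint, Set.empty_disjoint]

theorem neg_mem_recessionCone_of_maximal {L : AddSubgroup E} [CompactSpace (E ⧸ L)] {K : Set E}
    (hK : Maximal (IsConvexFree (L : Set E)) K) {u : E} (hu : u ∈ recessionCone K) :
    -u ∈ recessionCone K := by
  rcases (interior K).eq_empty_or_nonempty with hempty | hne
  · rw [← coe_affineSpan_eq_of_interior_eq_empty hK hempty] at hu ⊢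
    exact neg_mem_recessionCone_affineSubspace hu
  · exact neg_mem_recessionCone_of_nonempty_interior hK hne hu

theorem stmt_9_general {L : AddSubgroup E} [CompactSpace (E ⧸ L)] {K : Set E}
    (hK : Maximal (IsConvexFree (L : Set E)) K) :
    ∃ S : Submodule ℝ E, (recessionCone K : Set E) = S :=
  exists_submodule_coe_eq_recessionCone hK.prop.convex fun _ =>
    neg_mem_recessionCone_of_maximal hK

instance compactSpace_quotient_of_isZLattice (L : Submodule ℤ E) [DiscreteTopology L]
    [IsZLattice ℝ L] : CompactSpace (E ⧸ L.toAddSubgroup) := by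
  have hrange : IsCompact (Set.range ((↑) : E → E ⧸ L.toAddSubgroup)) :=
    IsZLattice.isCompact_range_of_periodic L _ continuous_quot_mk fun z w hw =>
      QuotientAddGroup.mk_add_of_mem z hw
  rwa [QuotientAddGroup.mk_surjective.range_eq, isCompact_univ_iff] at hrange

end FiniteDimensional

theorem coe_span_int_range_basisFun (d : ℕ) :
    (Submodule.span ℤ (Set.range (Pi.basisFun ℝ (Fin d))) : Set (Fin d → ℝ)) = intLattice d := by
  ext x
  simp [Module.Basis.mem_span_iff_repr_mem, intLattice, funext_iff, Classical.skolem]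

theorem IsMaxLatticeFree.maximal_isConvexFree {d : ℕ} {K : Set (Fin d → ℝ)}
    (hK : IsMaxLatticeFree d K) : Maximal (IsConvexFree (intLattice d)) K := by
  obtain ⟨⟨hclosed, hconv, hfree⟩, hmax⟩ := hK
  refine ⟨⟨hclosed, hconv, Set.disjoint_iff_inter_eq_empty.2 hfree⟩, fun K' hK' hKK' => ?_⟩
  exact (hmax K' ⟨hK'.isClosed, hK'.convex, hK'.disjoint.inter_eq⟩ hKK').subset

/-- The recession cone of a `d`-dimensional maximal lattice-free
set in `ℝ^d` is a linear subspace. -/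
theorem stmt_9 (d : ℕ) (K : Set (Fin d → ℝ))
    (hK : IsMaxLatticeFree d K) (hdim : affineSpan ℝ K = ⊤) :
    ∃ S : Submodule ℝ (Fin d → ℝ), recCone d K = (S : Set (Fin d → ℝ)) := by
  have hmax := hK.maximal_isConvexFree
  rw [← coe_span_int_range_basisFun] at hmax
  exact stmt_9_general (L := (Submodule.span ℤ _).toAddSubgroup) hmax
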